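/- For every n ≥ 3, the incidence submatrix of trees versus forests with an isolated vertex has full row rank: the matrix over ℚ whose rows are indexed by the isomorphism classes of forests on n vertices with n−2 edges having at least one isolated vertex, whose columns are indexed by the isomorphism classes of trees on n vertices, and whose entry at (f, t) is the number of edges e of (a representative of) t such that the forest obtained from t by deleting e is isomorphic to f, has linearly independent rows. -/

import Mathlib

/-- Isomorphy of simple graphs on `Fin n` as an equivalence relation. -/
def graphIsoSetoid (n : ℕ) : Setoid (SimpleGraph (Fin n)) where
  r G G' := Nonempty (G ≃g G')
  iseqv := by
    refine ⟨fun G => ⟨SimpleGraph.Iso.refl⟩, ?_, ?_⟩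
    · rintro G G' ⟨f⟩; exact ⟨f.symm⟩
    · rintro G G' G'' ⟨f⟩ ⟨g⟩; exact ⟨f.trans g⟩

/-!
Let `F` be the isomorphism-invariant function on graphs whose value on each forest is its
coefficient in a linear relation among the rows. Write `T - v` for `T` with all edges at `v`
deleted, so that `v` becomes isolated. Deleting an edge of a graph `T` without isolated vertices
leaves exactly one isolated vertex only if the edge is pendant, so the relation reads
`∑ v, x v T = 0`, where `x v T = F (T - v)` if `v` is a leaf of `T` and `x v T = 0` otherwise.

The vectors `x v` have pairwise nonnegative dot products. If the leaves `v` and `w` of `T` are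
adjacent, then `T - v = T - w` and `T` contributes a square. The remaining `T` are
`S + vu + wz` with `v`, `w` isolated in `S` and `u`, `z` arbitrary other vertices; summing
`F (S + wz) * F (S + vu)` over `u` and `z` gives a square, since `S + vu` and `S + wu` are
isomorphic by the transposition of `v` and `w`.

Vectors with sum zero and pairwise nonnegative dot products all vanish, and each forest is `T - v`
for some leaf `v` of some `T`, so `F` vanishes on it.
-/

open Finset SimpleGraph

theorem eq_zero_of_sum_eq_zero_of_dotProduct_nonneg {ι κ R : Type*} [Ring R] [LinearOrder R]
    [IsStrictOrderedRing R] [Fintype ι] [Fintype κ] {a : ι → κ → R} (hsum : ∑ i, a i = 0)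
    (hnonneg : Pairwise fun i j => 0 ≤ a i ⬝ᵥ a j) (i : ι) : a i = 0 := by
  have hall : ∀ j ∈ univ, 0 ≤ a i ⬝ᵥ a j := by
    intro j _
    obtain rfl | hij := eq_or_ne i j
    · exact sum_nonneg fun k _ => mul_self_nonneg (a i k)
    · exact hnonneg hij
  have htotal : ∑ j, a i ⬝ᵥ a j = 0 := by rw [← dotProduct_sum, hsum, dotProduct_zero]
  exact dotProduct_self_eq_zero.1 ((sum_eq_zero_iff_of_nonneg hall).1 htotal i (mem_univ i))

section Leaf

variable {V : Type*} {G H : SimpleGraph V} {u v w : V}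

/-- A leaf of a graph: a vertex with exactly one neighbour. -/
def IsLeaf (G : SimpleGraph V) (v : V) : Prop := ∃ u, G.neighborSet v = {u}

theorem adj_of_neighborSet_eq_singleton (h : G.neighborSet v = {u}) : G.Adj v u := by
  rw [← mem_neighborSet, h, Set.mem_singleton_iff]

theorem isIsolated_deleteIncidenceSet (G : SimpleGraph V) (v : V) :
    (G.deleteIncidenceSet v).IsIsolated v :=
  fun _ h => (deleteIncidenceSet_adj.1 h).2.1 rfl

theorem neighborSet_sup_edge_of_isIsolated (hv : G.IsIsolated v) (hvu : v ≠ u) :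
    (G ⊔ edge v u).neighborSet v = {u} := by
  ext x
  simp only [mem_neighborSet, sup_adj, edge_adj, hv x, Set.mem_singleton_iff]
  grind

theorem neighborSet_sup_edge_of_ne (hwv : w ≠ v) (hwu : w ≠ u) :
    (G ⊔ edge v u).neighborSet w = G.neighborSet w := by
  ext x
  simp only [mem_neighborSet, sup_adj, edge_adj]
  grind

theorem isIsolated_sup_edge (hw : G.IsIsolated w) (hwv : w ≠ v) (hwu : w ≠ u) :
    (G ⊔ edge v u).IsIsolated w := by
  rw [← neighborSet_eq_empty, neighborSet_sup_edge_of_ne hwv hwu, neighborSet_eq_empty]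
  exact hw

theorem neighborSet_deleteIncidenceSet (hvw : v ≠ w) :
    (G.deleteIncidenceSet w).neighborSet v = G.neighborSet v \ {w} := by
  ext x
  simp [deleteIncidenceSet_adj, hvw]

theorem deleteIncidenceSet_sup_edge (hv : G.IsIsolated v) (u : V) :
    (G ⊔ edge v u).deleteIncidenceSet v = G := by
  ext a b
  have hav : G.Adj a b → a ≠ v := by rintro h rfl; exact hv b h
  have hbv : G.Adj a b → b ≠ v := by rintro h rfl; exact hv a h.symm
  simp only [deleteIncidenceSet_adj, sup_adj, edge_adj]
  grind

theorem deleteIncidenceSet_sup_edge_of_neighborSet_eq (h : G.neighborSet v = {u}) :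
    G.deleteIncidenceSet v ⊔ edge v u = G := by
  have hadj : ∀ x, G.Adj v x ↔ x = u := Set.ext_iff.1 h
  have hne := fun x => G.irrefl (v := x)
  have hcomm := G.adj_comm
  ext a b
  simp only [sup_adj, deleteIncidenceSet_adj, edge_adj]
  grind

theorem isIsolated_deleteEdges_singleton_iff {e : Sym2 V} (hv : ¬G.IsIsolated v) :
    (G.deleteEdges {e}).IsIsolated v ↔ ∃ u, G.neighborSet v = {u} ∧ e = s(v, u) := by
  obtain ⟨x, hx⟩ := exists_adj_iff_not_isIsolated.2 hv
  have hiso : (G.deleteEdges {e}).IsIsolated v ↔ ∀ y, G.Adj v y → s(v, y) = e := by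
    simp [IsIsolated, deleteEdges_adj]
  rw [hiso]
  constructor
  · intro h
    refine ⟨x, Set.eq_singleton_iff_unique_mem.2 ⟨hx, fun y hy => ?_⟩, (h x hx).symm⟩
    exact Sym2.congr_right.1 ((h y hy).trans (h x hx).symm)
  · rintro ⟨u, hu, rfl⟩ y hy
    have hyu : y ∈ G.neighborSet v := hy
    rw [hu, Set.mem_singleton_iff] at hyu
    rw [hyu]

theorem deleteEdges_singleton_eq_deleteIncidenceSet (h : G.neighborSet v = {u}) :
    G.deleteEdges {s(v, u)} = G.deleteIncidenceSet v := by
  have hadj : ∀ x, G.Adj v x ↔ x = u := Set.ext_iff.1 h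
  have hcomm := G.adj_comm
  ext a b
  simp only [deleteEdges_adj, deleteIncidenceSet_adj, Set.mem_singleton_iff, Sym2.eq_iff]
  grind

theorem deleteIncidenceSet_eq_of_adj_of_isLeaf (hv : IsLeaf G v)
    (hw : IsLeaf G w) (hvw : G.Adj v w) : G.deleteIncidenceSet v = G.deleteIncidenceSet w := by
  obtain ⟨u, hu⟩ := hv
  obtain ⟨z, hz⟩ := hw
  obtain rfl : w = u := hu.subset hvw
  obtain rfl : v = z := hz.subset hvw.symm
  rw [← deleteEdges_singleton_eq_deleteIncidenceSet hu,
    ← deleteEdges_singleton_eq_deleteIncidenceSet hz, Sym2.eq_swap]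

theorem existsUnique_isIsolated_congr (φ : G ≃g H) :
    (∃! v, G.IsIsolated v) ↔ ∃! v, H.IsIsolated v :=
  φ.toEquiv.existsUnique_congr fun {_} =>
    φ.toEquiv.forall_congr fun {_} => not_congr φ.map_adj_iff.symm

theorem nonempty_iso_deleteEdges_singleton (φ : G ≃g H) (e : Sym2 V) :
    Nonempty (G.deleteEdges {e} ≃g H.deleteEdges {e.map φ}) :=
  ⟨φ.toEquiv, fun {a b} => by
    have hmap : s(φ a, φ b) = e.map φ ↔ s(a, b) = e := by
      rw [← Sym2.map_mk, (Sym2.map.injective φ.injective).eq_iff]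
    simpa [deleteEdges_adj, φ.map_adj_iff] using fun _ => not_congr hmap⟩

theorem nonempty_iso_sup_edge (hv : G.IsIsolated v) (hw : G.IsIsolated w) (huv : u ≠ v)
    (huw : u ≠ w) : Nonempty (G ⊔ edge v u ≃g G ⊔ edge w u) := by
  classical
  refine ⟨⟨Equiv.swap v w, fun {a b} => ?_⟩⟩
  have hv' : ∀ x, ¬G.Adj x v := fun x h => hv x h.symm
  have hw' : ∀ x, ¬G.Adj x w := fun x h => hw x h.symm
  simp only [IsIsolated] at hv hw
  simp only [sup_adj, edge_adj, Equiv.swap_apply_def]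
  grind

theorem eq_sup_edge_sup_edge_iff {S T : SimpleGraph V} {z : V} (hvw : v ≠ w) :
    ((S.IsIsolated v ∧ S.IsIsolated w) ∧ (u ≠ v ∧ u ≠ w) ∧ (z ≠ v ∧ z ≠ w) ∧
        T = S ⊔ edge v u ⊔ edge w z) ↔
      ¬T.Adj v w ∧ T.neighborSet v = {u} ∧ T.neighborSet w = {z} ∧
        S = (T.deleteIncidenceSet w).deleteIncidenceSet v := by
  constructor
  · rintro ⟨⟨hv, hw⟩, ⟨huv, huw⟩, ⟨hzv, hzw⟩, rfl⟩
    have hw' : (S ⊔ edge v u).IsIsolated w := isIsolated_sup_edge hw hvw.symm huw.symm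
    have hNv : (S ⊔ edge v u ⊔ edge w z).neighborSet v = {u} := by
      rw [neighborSet_sup_edge_of_ne hvw hzv.symm, neighborSet_sup_edge_of_isIsolated hv huv.symm]
    refine ⟨?_, hNv, neighborSet_sup_edge_of_isIsolated hw' hzw.symm, ?_⟩
    · rw [← mem_neighborSet, hNv]
      exact huw.symm
    · rw [deleteIncidenceSet_sup_edge hw', deleteIncidenceSet_sup_edge hv]
  · rintro ⟨hadj, hNv, hNw, rfl⟩
    have hvu : T.Adj v u := adj_of_neighborSet_eq_singleton hNv
    have hwz : T.Adj w z := adj_of_neighborSet_eq_singleton hNw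
    have huw : u ≠ w := by rintro rfl; exact hadj hvu
    have hzv : z ≠ v := by rintro rfl; exact hadj hwz.symm
    have hNv' : (T.deleteIncidenceSet w).neighborSet v = {u} := by
      rw [neighborSet_deleteIncidenceSet hvw, hNv]
      exact Set.sdiff_singleton_eq_self huw.symm
    refine ⟨⟨isIsolated_deleteIncidenceSet _ v, fun x hx => ?_⟩, ⟨hvu.ne', huw⟩,
      ⟨hzv, hwz.ne'⟩, ?_⟩
    · exact isIsolated_deleteIncidenceSet T w x (deleteIncidenceSet_le _ v hx)
    · rw [deleteIncidenceSet_sup_edge_of_neighborSet_eq hNv',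
        deleteIncidenceSet_sup_edge_of_neighborSet_eq hNw]

end Leaf

section LeafVector

variable {V M : Type*}

open Classical in
/-- For a function `F` on graphs and a vertex `v`, the vector indexed by graphs whose entry at `T`
is the value of `F` on `T` with its pendant edge at `v` deleted, and `0` if `v` is not a leaf. -/
noncomputable def leafVector [Zero M] (F : SimpleGraph V → M) (v : V) (T : SimpleGraph V) : M :=
  if IsLeaf T v then F (T.deleteIncidenceSet v) else 0

variable [Fintype V]

section AddCommMonoid

variable [AddCommMonoid M]

open Classical in
theorem sum_deleteEdges_isIsolated_eq_leafVector {F : SimpleGraph V → M} {T : SimpleGraph V}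
    {v : V} (hv : ¬T.IsIsolated v) :
    (∑ e ∈ T.edgeFinset,
      if (T.deleteEdges {e}).IsIsolated v then F (T.deleteEdges {e}) else 0) =
      leafVector F v T := by
  simp only [isIsolated_deleteEdges_singleton_iff hv]
  rw [leafVector]
  split_ifs with hleaf
  · obtain ⟨u, hu⟩ := hleaf
    have hmem : s(v, u) ∈ T.edgeFinset := mem_edgeFinset.2 (adj_of_neighborSet_eq_singleton hu)
    rw [sum_eq_single_of_mem _ hmem, if_pos ⟨u, hu, rfl⟩,
      deleteEdges_singleton_eq_deleteIncidenceSet hu]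
    rintro e - he
    refine if_neg ?_
    rintro ⟨u', hu', rfl⟩
    exact he (by rw [Set.singleton_injective (hu'.symm.trans hu)])
  · exact sum_eq_zero fun e _ => if_neg fun ⟨u, hu, _⟩ => hleaf ⟨u, hu⟩

open Classical in
theorem sum_leafVector_eq_sum_deleteEdges {F : SimpleGraph V → M}
    (hF : ∀ G, F G ≠ 0 → ∃! v, G.IsIsolated v) {T : SimpleGraph V}
    (hT : ∀ v, ¬T.IsIsolated v) :
    ∑ v, leafVector F v T = ∑ e ∈ T.edgeFinset, F (T.deleteEdges {e}) := by
  simp only [← sum_deleteEdges_isIsolated_eq_leafVector (hT _)]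
  rw [sum_comm]
  refine sum_congr rfl fun e _ => ?_
  by_cases h0 : F (T.deleteEdges {e}) = 0
  · simp only [h0, ite_self, sum_const_zero]
  · obtain ⟨v, hv, hunique⟩ := hF _ h0
    rw [Fintype.sum_eq_single v fun w hw => if_neg fun h => hw (hunique w h), if_pos hv]

open Classical in
theorem sum_deleteEdges_congr {F : SimpleGraph V → M} (hF : ∀ ⦃G H⦄, G ≃g H → F G = F H)
    {G H : SimpleGraph V} (φ : G ≃g H) :
    ∑ e ∈ G.edgeFinset, F (G.deleteEdges {e}) = ∑ e ∈ H.edgeFinset, F (H.deleteEdges {e}) := by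
  have hmem : ∀ {G H : SimpleGraph V} (φ : G ≃g H), ∀ e ∈ G.edgeFinset, e.map φ ∈ H.edgeFinset := by
    intro G H φ e he
    induction e with
    | h a b => simpa [φ.map_adj_iff] using he
  refine sum_nbij' (Sym2.map φ) (Sym2.map φ.symm) (hmem φ) (hmem φ.symm) (fun e _ => ?_)
    (fun e _ => ?_) fun e _ => hF (nonempty_iso_deleteEdges_singleton φ e).some
  · simp [Sym2.map_map]
  · simp [Sym2.map_map]

open Classical in
theorem sum_nonadj_leaves_eq {v w : V} (hvw : v ≠ w)
    (φ : SimpleGraph V → M) :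
    ∑ T with IsLeaf T v ∧ IsLeaf T w ∧ ¬T.Adj v w, φ T =
      ∑ S with S.IsIsolated v ∧ S.IsIsolated w,
        ∑ u ∈ {v, w}ᶜ, ∑ z ∈ {v, w}ᶜ, φ (S ⊔ edge v u ⊔ edge w z) := by
  simp only [← sum_product']
  symm
  refine sum_nbij (fun p => p.1 ⊔ edge v p.2.1 ⊔ edge w p.2.2) ?_ ?_ ?_ fun _ _ => rfl
  · rintro ⟨S, u, z⟩ hp
    simp only [mem_product, mem_filter, mem_univ, true_and, mem_compl, mem_insert, mem_singleton,
      not_or] at hp ⊢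
    obtain ⟨hadj, hNv, hNw, -⟩ :=
      (eq_sup_edge_sup_edge_iff hvw).1 ⟨hp.1, hp.2.1, hp.2.2, rfl⟩
    exact ⟨⟨u, hNv⟩, ⟨z, hNw⟩, hadj⟩
  · rintro ⟨S, u, z⟩ hp ⟨S', u', z'⟩ hp' heq
    simp only [coe_product, Set.mem_prod, mem_coe, mem_filter, mem_univ, true_and, mem_compl,
      mem_insert, mem_singleton, not_or] at hp hp' heq
    obtain ⟨-, hNv, hNw, hS⟩ := (eq_sup_edge_sup_edge_iff hvw).1 ⟨hp.1, hp.2.1, hp.2.2, rfl⟩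
    obtain ⟨-, hNv', hNw', hS'⟩ :=
      (eq_sup_edge_sup_edge_iff hvw).1 ⟨hp'.1, hp'.2.1, hp'.2.2, heq⟩
    rw [hS, hS', Set.singleton_injective (hNv.symm.trans hNv'),
      Set.singleton_injective (hNw.symm.trans hNw')]
  · rintro T hT
    simp only [mem_coe, mem_filter, mem_univ, true_and] at hT
    obtain ⟨⟨u, hNv⟩, ⟨z, hNw⟩, hadj⟩ := hT
    obtain ⟨hS, hu, hz, heq⟩ := (eq_sup_edge_sup_edge_iff hvw).2 ⟨hadj, hNv, hNw, rfl⟩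
    exact ⟨(_, u, z), by simpa only [coe_product, Set.mem_prod, mem_coe, mem_filter, mem_univ,
      true_and, mem_compl, mem_insert, mem_singleton, not_or] using ⟨hS, hu, hz⟩, heq.symm⟩

end AddCommMonoid

variable {R : Type*} [Ring R] [LinearOrder R] [IsStrictOrderedRing R]

open Classical in
theorem sum_nonadj_leaves_nonneg {F : SimpleGraph V → R}
    (hF : ∀ ⦃G H⦄, G ≃g H → F G = F H) {v w : V} (hvw : v ≠ w) :
    0 ≤ ∑ T with IsLeaf T v ∧ IsLeaf T w ∧ ¬T.Adj v w,
      F (T.deleteIncidenceSet v) * F (T.deleteIncidenceSet w) := by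
  rw [sum_nonadj_leaves_eq hvw]
  refine sum_nonneg fun S hS => ?_
  simp only [mem_filter, mem_univ, true_and] at hS
  have hterm : ∀ u ∈ ({v, w}ᶜ : Finset V), ∀ z ∈ ({v, w}ᶜ : Finset V),
      F ((S ⊔ edge v u ⊔ edge w z).deleteIncidenceSet v) *
          F ((S ⊔ edge v u ⊔ edge w z).deleteIncidenceSet w) =
        F (S ⊔ edge w z) * F (S ⊔ edge w u) := by
    intro u hu z hz
    simp only [mem_compl, mem_insert, mem_singleton, not_or] at hu hz
    rw [deleteIncidenceSet_sup_edge (isIsolated_sup_edge hS.2 hvw.symm (Ne.symm hu.2)),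
      sup_right_comm,
      deleteIncidenceSet_sup_edge (isIsolated_sup_edge hS.1 hvw (Ne.symm hz.1)),
      hF (nonempty_iso_sup_edge hS.1 hS.2 hu.1 hu.2).some]
  rw [sum_congr rfl fun u hu => sum_congr rfl (hterm u hu), sum_comm, ← sum_mul_sum]
  exact mul_self_nonneg _

open Classical in
theorem leafVector_dotProduct_nonneg {F : SimpleGraph V → R}
    (hF : ∀ ⦃G H⦄, G ≃g H → F G = F H) {v w : V} (hvw : v ≠ w) :
    0 ≤ leafVector F v ⬝ᵥ leafVector F w := by
  have hsplit : leafVector F v ⬝ᵥ leafVector F w =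
      ∑ T with IsLeaf T v ∧ IsLeaf T w ∧ T.Adj v w,
          F (T.deleteIncidenceSet v) * F (T.deleteIncidenceSet w) +
        ∑ T with IsLeaf T v ∧ IsLeaf T w ∧ ¬T.Adj v w,
          F (T.deleteIncidenceSet v) * F (T.deleteIncidenceSet w) := by
    simp only [sum_filter, ← sum_add_distrib, dotProduct, leafVector]
    refine sum_congr rfl fun T _ => ?_
    by_cases hv : IsLeaf T v <;> by_cases hw : IsLeaf T w <;> by_cases hadj : T.Adj v w <;>
      simp [hv, hw, hadj]
  rw [hsplit]
  refine add_nonneg (sum_nonneg fun T hT => ?_) (sum_nonadj_leaves_nonneg hF hvw)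
  obtain ⟨hv, hw, hadj⟩ := (mem_filter.1 hT).2
  rw [deleteIncidenceSet_eq_of_adj_of_isLeaf hv hw hadj]
  exact mul_self_nonneg _

open Classical in
theorem leafVector_eq_zero_of_sum_eq_zero {F : SimpleGraph V → R}
    (hF : ∀ ⦃G H⦄, G ≃g H → F G = F H) (hsum : ∑ v, leafVector F v = 0) (v : V) :
    leafVector F v = 0 :=
  eq_zero_of_sum_eq_zero_of_dotProduct_nonneg hsum
    (fun _ _ hvw => leafVector_dotProduct_nonneg hF hvw) v

end LeafVector

section ClassFunction

variable {ι κ V M : Type*} [AddCommMonoid M] {f : ι → SimpleGraph V} {g : ι → M} {s : Finset ι}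
  {G H : SimpleGraph V}

open Classical in
/-- The isomorphism-invariant function on graphs that takes the value `g i` on the isomorphism
class of `f i` for `i ∈ s`, and `0` elsewhere, provided the `f i` are pairwise non-isomorphic. -/
noncomputable def classFunction (f : ι → SimpleGraph V) (g : ι → M) (s : Finset ι)
    (G : SimpleGraph V) : M :=
  ∑ i ∈ s with Nonempty (G ≃g f i), g i

theorem classFunction_congr (φ : G ≃g H) : classFunction f g s G = classFunction f g s H := by
  have hiff : ∀ i, Nonempty (G ≃g f i) ↔ Nonempty (H ≃g f i) := fun i =>
    ⟨fun ⟨ψ⟩ => ⟨φ.symm.trans ψ⟩, fun ⟨ψ⟩ => ⟨φ.trans ψ⟩⟩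
  classical
  exact sum_congr (filter_congr fun i _ => hiff i) fun _ _ => rfl

theorem exists_iso_of_classFunction_ne_zero (h : classFunction f g s G ≠ 0) :
    ∃ i, Nonempty (G ≃g f i) := by
  classical
  obtain ⟨i, hi, -⟩ := exists_ne_zero_of_sum_ne_zero h
  exact ⟨i, (mem_filter.1 hi).2⟩

theorem classFunction_apply (hf : ∀ ⦃i j⦄, Nonempty (f i ≃g f j) → i = j) {i : ι} (hi : i ∈ s) :
    classFunction f g s (f i) = g i := by
  classical
  have hfilter : {j ∈ s | Nonempty (f i ≃g f j)} = {i} := by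
    ext j
    simp only [mem_filter, mem_singleton]
    refine ⟨fun h => (hf h.2).symm, ?_⟩
    rintro rfl
    exact ⟨hi, ⟨Iso.refl⟩⟩
  rw [classFunction, hfilter, sum_singleton]

open Classical in
theorem sum_classFunction_deleteEdges {R : Type*} [Semiring R] {g : ι → R} [Fintype V]
    (T : SimpleGraph V) :
    ∑ e ∈ T.edgeFinset, classFunction f g s (T.deleteEdges {e}) =
      ∑ i ∈ s, g i * ({e ∈ T.edgeSet | Nonempty (T.deleteEdges {e} ≃g f i)}.ncard : R) := by
  simp only [classFunction, sum_filter]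
  rw [sum_comm]
  refine sum_congr rfl fun i _ => ?_
  have hcard : {e ∈ T.edgeSet | Nonempty (T.deleteEdges {e} ≃g f i)}.ncard =
      #{e ∈ T.edgeFinset | Nonempty (T.deleteEdges {e} ≃g f i)} := by
    rw [← Set.ncard_coe_finset]
    simp
  rw [hcard, ← sum_filter, sum_const, nsmul_eq_mul, Nat.cast_comm]

open Classical in
theorem sum_leafVector_classFunction_eq_zero [Fintype V] {t : κ → SimpleGraph V}
    (hiso : ∀ i, ∃! v, (f i).IsIsolated v)
    (ht : ∀ i (T : SimpleGraph V) v, IsLeaf T v → Nonempty (T.deleteIncidenceSet v ≃g f i) →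
      ∃ j, Nonempty (t j ≃g T))
    (hrel : ∀ j, ∑ e ∈ (t j).edgeFinset, classFunction f g s ((t j).deleteEdges {e}) = 0) :
    ∑ v, leafVector (classFunction f g s) v = 0 := by
  have hunique : ∀ G, classFunction f g s G ≠ 0 → ∃! v, G.IsIsolated v := fun G hG => by
    obtain ⟨i, ⟨φ⟩⟩ := exists_iso_of_classFunction_ne_zero hG
    exact (existsUnique_isIsolated_congr φ).2 (hiso i)
  ext T
  rw [Finset.sum_apply, Pi.zero_apply]
  by_contra hne
  obtain ⟨v, -, hv⟩ := exists_ne_zero_of_sum_ne_zero hne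
  obtain ⟨hleaf, hcf⟩ : IsLeaf T v ∧ classFunction f g s (T.deleteIncidenceSet v) ≠ 0 := by
    simpa [leafVector] using hv
  obtain ⟨i, hi⟩ := exists_iso_of_classFunction_ne_zero hcf
  obtain ⟨j, ⟨φ⟩⟩ := ht i T v hleaf hi
  have hT : ∀ w, ¬T.IsIsolated w := by
    intro w hw
    have hw' : (T.deleteIncidenceSet v).IsIsolated w := fun x hx =>
      hw x (deleteIncidenceSet_le T v hx)
    obtain rfl := (hunique _ hcf).unique hw' (isIsolated_deleteIncidenceSet T v)
    obtain ⟨u, hu⟩ := hleaf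
    exact hw u (adj_of_neighborSet_eq_singleton hu)
  apply hne
  rw [sum_leafVector_eq_sum_deleteEdges hunique hT,
    ← sum_deleteEdges_congr (fun _ _ ψ => classFunction_congr ψ) φ, hrel j]

end ClassFunction

theorem stmt19_general {ι κ V R : Type*} [Ring R] [LinearOrder R] [IsStrictOrderedRing R]
    [Finite V] [Nontrivial V] {f : ι → SimpleGraph V} {t : κ → SimpleGraph V}
    (hf : ∀ ⦃i j⦄, Nonempty (f i ≃g f j) → i = j)
    (hiso : ∀ i, ∃! v, (f i).IsIsolated v)
    (ht : ∀ i (T : SimpleGraph V) v, IsLeaf T v → Nonempty (T.deleteIncidenceSet v ≃g f i) →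
      ∃ j, Nonempty (t j ≃g T)) :
    LinearIndependent R fun i j =>
      ({e ∈ (t j).edgeSet | Nonempty ((t j).deleteEdges {e} ≃g f i)}.ncard : R) := by
  classical
  have := Fintype.ofFinite V
  rw [linearIndependent_iff']
  intro s g hg i hi
  have hrel : ∀ j, ∑ e ∈ (t j).edgeFinset, classFunction f g s ((t j).deleteEdges {e}) = 0 := by
    intro j
    rw [sum_classFunction_deleteEdges]
    simpa using congrFun hg j
  have hzero := leafVector_eq_zero_of_sum_eq_zero (fun _ _ φ => classFunction_congr φ)
    (sum_leafVector_classFunction_eq_zero hiso ht hrel)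
  obtain ⟨v, hv, -⟩ := hiso i
  obtain ⟨u, hu⟩ := exists_ne v
  have hentry := congrFun (hzero v) (f i ⊔ edge v u)
  rwa [leafVector, if_pos ⟨u, neighborSet_sup_edge_of_isIsolated hv hu.symm⟩,
    deleteIncidenceSet_sup_edge hv, classFunction_apply hf hi] at hentry

section Forest

variable {V : Type*} [Finite V] {G : SimpleGraph V} {u v : V}

theorem isTree_of_isAcyclic_of_ncard (hG : G.IsAcyclic)
    (hcard : G.edgeSet.ncard + 1 = Nat.card V) : G.IsTree := by
  have : Nonempty V := (Nat.card_pos_iff.1 (by omega)).1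
  obtain ⟨T, hGT, -, hT⟩ := connected_top.exists_isTree_le_of_le_of_isAcyclic le_top hG
  have hTcard : T.edgeSet.ncard + 1 = Nat.card V := (isTree_iff_connected_and_card.1 hT).2
  have hedge : G.edgeSet = T.edgeSet :=
    Set.eq_of_subset_of_ncard_le (edgeSet_mono hGT) (by omega) (Set.toFinite _)
  rwa [edgeSet_injective hedge]

theorem isTree_sup_edge_of_isIsolated (hG : G.IsAcyclic)
    (hcard : G.edgeSet.ncard + 2 = Nat.card V) (hv : G.IsIsolated v) (hvu : v ≠ u) :
    (G ⊔ edge v u).IsTree := by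
  have hacyclic : (G ⊔ edge v u).IsAcyclic := by
    refine hG.sup_edge_of_not_reachable fun h => ?_
    obtain ⟨x, hx⟩ := h.nonempty_neighborSet_left hvu
    exact hv x hx
  refine isTree_of_isAcyclic_of_ncard hacyclic ?_
  rw [edgeSet_sup, edgeSet_edge_of_ne hvu, Set.union_singleton,
    Set.ncard_insert_of_notMem (a := s(v, u)) (s := G.edgeSet) fun hm => hv u hm]
  exact hcard

theorem existsUnique_isIsolated_of_isAcyclic (hV : 3 ≤ Nat.card V) (hG : G.IsAcyclic)
    (hcard : G.edgeSet.ncard + 2 = Nat.card V) (hiso : ∃ v, G.IsIsolated v) :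
    ∃! v, G.IsIsolated v := by
  obtain ⟨v, hv⟩ := hiso
  refine ⟨v, hv, fun w hw => by_contra fun hwv => ?_⟩
  obtain ⟨u, hu⟩ : ∃ u, u ∉ ({v, w} : Set V) := by
    by_contra! h
    have huniv : ({v, w} : Set V) = Set.univ := Set.eq_univ_of_forall h
    have hpair := Set.ncard_pair (Ne.symm hwv)
    rw [huniv, Set.ncard_univ] at hpair
    omega
  have : Nontrivial V := ⟨v, w, Ne.symm hwv⟩
  simp only [Set.mem_insert_iff, Set.mem_singleton_iff, not_or] at hu
  have htree : (G ⊔ edge v u).IsTree := isTree_sup_edge_of_isIsolated hG hcard hv (Ne.symm hu.1)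
  exact htree.connected.preconnected.not_isIsolated w (isIsolated_sup_edge hw hwv (Ne.symm hu.2))

theorem isTree_of_isLeaf_of_iso {T : SimpleGraph V} (hG : G.IsAcyclic)
    (hcard : G.edgeSet.ncard + 2 = Nat.card V) (hv : IsLeaf T v)
    (φ : T.deleteIncidenceSet v ≃g G) : T.IsTree := by
  obtain ⟨u, hu⟩ := hv
  have hcard' : (T.deleteIncidenceSet v).edgeSet.ncard = G.edgeSet.ncard :=
    Nat.card_congr φ.mapEdgeSet
  rw [← deleteIncidenceSet_sup_edge_of_neighborSet_eq hu]
  exact isTree_sup_edge_of_isIsolated (φ.isAcyclic_iff.2 hG) (hcard' ▸ hcard)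
    (isIsolated_deleteIncidenceSet T v) (adj_of_neighborSet_eq_singleton hu).ne

end Forest

theorem exists_iso_out_of_isTree {n : ℕ} {T : SimpleGraph (Fin n)} (hT : T.IsTree) :
    ∃ t : {c : Quotient (graphIsoSetoid n) //
        (Quotient.out c).Connected ∧ (Quotient.out c).edgeSet.ncard = n - 1},
      Nonempty (Quotient.out t.1 ≃g T) := by
  obtain ⟨φ⟩ : Nonempty (Quotient.out (Quotient.mk (graphIsoSetoid n) T) ≃g T) :=
    Quotient.mk_out (s := graphIsoSetoid n) T
  obtain ⟨hconn, hcard⟩ := isTree_iff_connected_and_card.1 hT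
  have hcard' : (Quotient.out (Quotient.mk (graphIsoSetoid n) T)).edgeSet.ncard =
      Nat.card T.edgeSet := Nat.card_congr φ.mapEdgeSet
  rw [Nat.card_fin] at hcard
  exact ⟨⟨_, φ.connected_iff.2 hconn, by omega⟩, ⟨φ⟩⟩

theorem stmt19 (n : ℕ) (hn : 3 ≤ n) :
    LinearIndependent ℚ
      (fun f : {c : Quotient (graphIsoSetoid n) //
            (Quotient.out c).IsAcyclic ∧ (Quotient.out c).edgeSet.ncard = n - 2 ∧
            ∃ v, ∀ w, ¬ (Quotient.out c).Adj v w} =>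
        fun t : {c : Quotient (graphIsoSetoid n) //
            (Quotient.out c).Connected ∧ (Quotient.out c).edgeSet.ncard = n - 1} =>
          (Set.ncard {e ∈ (Quotient.out t.1).edgeSet |
              Nonempty ((Quotient.out t.1).deleteEdges {e} ≃g Quotient.out f.1)} : ℚ)) := by
  have : Nontrivial (Fin n) := Fin.nontrivial_iff_two_le.2 (by omega)
  refine stmt19_general (fun _ _ h => Subtype.ext (Quotient.out_equiv_out.1 h)) ?_ ?_
  · rintro ⟨c, hacyclic, hcard, hiso⟩
    exact existsUnique_isIsolated_of_isAcyclic (by simpa using hn) hacyclic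
      (by rw [hcard, Nat.card_fin]; omega) hiso
  · rintro ⟨c, hacyclic, hcard, _⟩ T v hv ⟨φ⟩
    exact exists_iso_out_of_isTree <|
      isTree_of_isLeaf_of_iso hacyclic (by rw [hcard, Nat.card_fin]; omega) hv φ
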